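/- Let T > 0 and let (H_n) be a sequence of set-valued maps from [0,T] to ℝ^m that is uniformly integrally bounded (there is an integrable g : [0,T] → ℝ₊ with sup_{x∈H_n(t)} ‖x‖ ≤ g(t) for all n and t). Let H be a set-valued map on [0,T] with nonempty images such that for every τ ∈ [0,T], limsup_n H_n(τ) ⊂ H(τ). If h_n is an integrable selection of H_n for each n, then along some subsequence (h_n) converges weakly in L¹([0,T], ℝ^m) to a function h with h(u) ∈ co(H(u)) (the convex hull of H(u)) for every u ∈ [0,T]; in particular, along this subsequence, ∫_0^τ h_n(u) du → ∫_0^τ h(u) du for every τ ∈ [0,T]. -/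

import Mathlib

open MeasureTheory Filter Topology Metric Set Pointwise

noncomputable section

/-- `ℝ^m` with the Euclidean norm. -/
abbrev Euc (m : ℕ) := EuclideanSpace ℝ (Fin m)

/-- A standard set-valued map `F : ℝ^m ⇒ ℝ^m`: nonempty compact convex values,
closed graph, and linear growth. -/
def IsStandardSVM {m : ℕ} (F : Euc m → Set (Euc m)) : Prop :=
  (∀ x, (F x).Nonempty ∧ IsCompact (F x) ∧ Convex ℝ (F x)) ∧
  IsClosed {p : Euc m × Euc m | p.2 ∈ F p.1} ∧
  ∃ c > 0, ∀ x, ∀ z ∈ F x, ‖z‖ ≤ c * (1 + ‖x‖)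

/-- A solution of the differential inclusion `dx/dt ∈ F x`: an absolutely continuous
curve `z : ℝ → ℝ^m` (written as the integral of a locally integrable derivative `h`)
with `h t ∈ F (z t)` for almost every `t`. -/
def IsSolution {m : ℕ} (F : Euc m → Set (Euc m)) (z : ℝ → Euc m) : Prop :=
  Continuous z ∧ ∃ h : ℝ → Euc m,
    (∀ a b : ℝ, IntervalIntegrable h volume a b) ∧
    (∀ᵐ t ∂volume, h t ∈ F (z t)) ∧
    ∀ t : ℝ, z t = z 0 + ∫ u in (0:ℝ)..t, h u

/-- `Φ_t(x)`: the set of points reached at time `t` by solutions starting at `x`. -/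
def PhiT {m : ℕ} (F : Euc m → Set (Euc m)) (t : ℝ) (x : Euc m) : Set (Euc m) :=
  {y | ∃ z : ℝ → Euc m, IsSolution F z ∧ z 0 = x ∧ z t = y}

/-- `ω_Φ(x) = ⋂_{t ≥ 0} closure (Φ_{[t,∞)}(x))`. -/
def omegaLimitSV {m : ℕ} (F : Euc m → Set (Euc m)) (x : Euc m) : Set (Euc m) :=
  ⋂ t ∈ Ici (0:ℝ), closure {y | ∃ s ≥ t, y ∈ PhiT F s x}

/-- An attractor for the set-valued dynamical system induced by `F`: a nonempty,
compact, invariant set admitting a neighborhood `U` with `Φ_t(U) ⊆ N^ε(A)` for all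
`t` large enough. -/
def IsAttractorSV {m : ℕ} (F : Euc m → Set (Euc m)) (A : Set (Euc m)) : Prop :=
  A.Nonempty ∧ IsCompact A ∧
  (∀ x ∈ A, ∃ z : ℝ → Euc m, IsSolution F z ∧ z 0 = x ∧ Set.range z ⊆ A) ∧
  ∃ U : Set (Euc m), IsOpen U ∧ A ⊆ U ∧
    ∀ ε > 0, ∃ tε > 0, ∀ t ≥ tε, ∀ x ∈ U, PhiT F t x ⊆ Metric.thickening ε A

/-- The basin of attraction `B(A) = {x | ω_Φ(x) ⊆ A}`. -/
def basinSV {m : ℕ} (F : Euc m → Set (Euc m)) (A : Set (Euc m)) : Set (Euc m) :=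
  {x | omegaLimitSV F x ⊆ A}

/-- The limit set `L(X) = ⋂_{t ≥ 0} closure {X s : s ≥ t}` of a path. -/
def limitSet {m : ℕ} (X : ℝ → Euc m) : Set (Euc m) :=
  ⋂ t ∈ Ici (0:ℝ), closure {y | ∃ s ≥ t, X s = y}

/-- `inf_{z ∈ S_Φ} sup_{u ∈ [0,T]} ‖z u - Y u‖`. -/
def distToSol {m : ℕ} (F : Euc m → Set (Euc m)) (Y : ℝ → Euc m) (T : ℝ) : ℝ :=
  sInf {d | ∃ z : ℝ → Euc m, IsSolution F z ∧ d = ⨆ u : Icc (0:ℝ) T, ‖z u - Y u‖}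

/-- Asymptotic pseudotrajectory of the set-valued dynamical system induced by `F`. -/
def IsAPT {m : ℕ} (F : Euc m → Set (Euc m)) (X : ℝ → Euc m) : Prop :=
  ∀ T > 0, Tendsto (fun t => distToSol F (fun u => X (t + u)) T) atTop (𝓝 0)

/-- A point `p` is attainable by the process `X`: for every `t > 0` and every
neighborhood `U` of `p`, `P(∃ s ≥ t, X s ∈ U) > 0`. -/
def Attainable {m : ℕ} {Ω : Type*} [MeasurableSpace Ω] (μ : Measure Ω)
    (X : ℝ → Ω → Euc m) (p : Euc m) : Prop :=
  ∀ t > 0, ∀ U ∈ 𝓝 p, 0 < μ {ω | ∃ s ≥ t, X s ω ∈ U}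

/-- `τ_n = γ_1 + ⋯ + γ_n`. -/
def tauOf (γ : ℕ → ℝ) (n : ℕ) : ℝ := ∑ i ∈ Finset.range n, γ (i + 1)

/-- `m(t) = sup {j | τ_j ≤ t}`. -/
def mIdx (γ : ℕ → ℝ) (t : ℝ) : ℕ := sSup {j | tauOf γ j ≤ t}

/-- Hypothesis H1: there is `w t α T` decreasing to `0` in `t` dominating the
conditional probability that `sup_{s ≥ t} inf_{z ∈ S_Φ} sup_{u ∈ [0,T]} ‖z u − X (s+u)‖ ≥ α`. -/
def HypH1 {m : ℕ} {Ω : Type*} [MeasurableSpace Ω] (μ : Measure Ω)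
    (𝓕 : ℝ → MeasurableSpace Ω) (F : Euc m → Set (Euc m)) (X : ℝ → Ω → Euc m) : Prop :=
  ∃ w : ℝ → ℝ → ℝ → ℝ,
    (∀ α > 0, ∀ T > 0, Antitone (fun t => w t α T) ∧ Tendsto (fun t => w t α T) atTop (𝓝 0)) ∧
    ∀ α > 0, ∀ T > 0, ∀ t : ℝ, ∀ᵐ ω ∂μ,
      (μ[Set.indicator {ω' | α ≤ ⨆ s : Ici t, distToSol F (fun u => X ((s : ℝ) + u) ω') T}
          (fun _ => (1:ℝ)) | 𝓕 t]) ω ≤ w t α T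

/-- `F^δ(x) = {y | ∃ z ∈ B(x,δ), dist(y, F z) < δ}`, with the convention `F^0 = F`. -/
def Fdelta {m : ℕ} (F : Euc m → Set (Euc m)) (δ : ℝ) (x : Euc m) : Set (Euc m) :=
  if δ = 0 then F x
  else {y | ∃ z : Euc m, dist z x < δ ∧ Metric.infDist y (F z) < δ}

/-- A `(δ(·), V(·))`-perturbed solution of `dx/dt ∈ F x`. -/
def IsPerturbedSolution {m : ℕ} (F : Euc m → Set (Euc m)) (δ : ℝ → ℝ) (V : ℝ → Euc m)
    (y : ℝ → Euc m) : Prop :=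
  Continuous y ∧ (∀ t > 0, 0 < δ t) ∧ Antitone δ ∧ Tendsto δ atTop (𝓝 0) ∧
  (∀ a b : ℝ, IntervalIntegrable V volume a b) ∧
  (∀ T > 0, Tendsto (fun t => ⨆ u : Icc (0:ℝ) T, ‖∫ r in t..(t + (u : ℝ)), V r‖)
    atTop (𝓝 0)) ∧
  ∃ h : ℝ → Euc m, (∀ a b : ℝ, IntervalIntegrable h volume a b) ∧
    (∀ᵐ t ∂(volume.restrict (Ioi (0:ℝ))), h t - V t ∈ Fdelta F (δ t) (y t)) ∧
    ∀ t ∈ Ici (0:ℝ), y t = y 0 + ∫ u in (0:ℝ)..t, h u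

/-- `Δ(n,T) = sup_{n < k ≤ m(τ_n + T)} ‖∑_{i=n}^{k-1} γ_{i+1} U_{i+1}‖`. -/
def DeltaNT {m : ℕ} {Ω : Type*} (γ : ℕ → ℝ) (U : ℕ → Ω → Euc m) (T : ℝ) (n : ℕ)
    (ω : Ω) : ℝ :=
  ⨆ k : {k : ℕ // n < k ∧ k ≤ mIdx γ (tauOf γ n + T)},
    ‖∑ i ∈ Finset.Ico n (k : ℕ), γ (i + 1) • U (i + 1) ω‖

/-- Condition (bruit2): the conditional probability that `sup_{m ≥ n} Δ(m,T) ≥ ε` is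
dominated by some `w n ε T` decreasing to `0` in `n`. -/
def Bruit2 {m : ℕ} {Ω : Type*} [MeasurableSpace Ω] (μ : Measure Ω)
    (𝓕 : ℕ → MeasurableSpace Ω) (γ : ℕ → ℝ) (U : ℕ → Ω → Euc m) : Prop :=
  ∃ w : ℕ → ℝ → ℝ → ℝ,
    (∀ ε > 0, ∀ T > 0, Antitone (fun n => w n ε T) ∧ Tendsto (fun n => w n ε T) atTop (𝓝 0)) ∧
    ∀ ε > 0, ∀ T > 0, ∀ n : ℕ, ∀ᵐ ω ∂μ,
      (μ[Set.indicator {ω' | ε ≤ ⨆ k : Ici n, DeltaNT γ U T (k : ℕ) ω'}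
          (fun _ => (1:ℝ)) | 𝓕 n]) ω ≤ w n ε T

/-- Topological `limsup` of a sequence of sets: points whose every neighborhood
meets infinitely many of the sets. -/
def setLimsup {X : Type*} [TopologicalSpace X] (A : ℕ → Set X) : Set X :=
  {y | ∀ U ∈ 𝓝 y, {n | (U ∩ A n).Nonempty}.Infinite}

/-- The operator `Λ^δ` on continuous paths `[0,T] → ℝ^m` (with `Λ^0 = Λ`). -/
def LambdaD {m : ℕ} (F : Euc m → Set (Euc m)) (T : ℝ) (hT : 0 ≤ T) (δ : ℝ)
    (z : C(Icc (0:ℝ) T, Euc m)) : Set C(Icc (0:ℝ) T, Euc m) :=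
  {y | ∃ h : ℝ → Euc m, IntervalIntegrable h volume 0 T ∧
    (∀ u : Icc (0:ℝ) T, h u ∈ Fdelta F δ (z u)) ∧
    ∀ τ : Icc (0:ℝ) T, y τ = z ⟨0, Set.left_mem_Icc.mpr hT⟩ + ∫ u in (0:ℝ)..(τ : ℝ), h u}

/-- `Φ^T(M) = closure (⋃_{s ∈ [0,T]} Φ_s(M))`. -/
def PhiTM {m : ℕ} (F : Euc m → Set (Euc m)) (T : ℝ) (M : Set (Euc m)) : Set (Euc m) :=
  closure (⋃ s ∈ Icc (0:ℝ) T, ⋃ x ∈ M, PhiT F s x)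

/-- `‖F‖ = sup_{x ∈ Φ^T(M)} sup_{y ∈ F x} ‖y‖`. -/
def normF {m : ℕ} (F : Euc m → Set (Euc m)) (T : ℝ) (M : Set (Euc m)) : ℝ :=
  sSup {r | ∃ x ∈ PhiTM F T M, ∃ y ∈ F x, r = ‖y‖}

/-- `K_C`: Lipschitz paths with constant `‖F‖ + C + 1` starting in `M`. -/
def KC {m : ℕ} (F : Euc m → Set (Euc m)) (T : ℝ) (hT : 0 ≤ T) (M : Set (Euc m))
    (C : ℝ) : Set C(Icc (0:ℝ) T, Euc m) :=
  {y | (∀ u v : Icc (0:ℝ) T, ‖y u - y v‖ ≤ (normF F T M + C + 1) * |(u : ℝ) - (v : ℝ)|) ∧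
    y ⟨0, Set.left_mem_Icc.mpr hT⟩ ∈ M}

/-- `S_{[0,T]}`: restrictions to `[0,T]` of solutions starting in `M`. -/
def SolRestrict {m : ℕ} (F : Euc m → Set (Euc m)) (T : ℝ) (M : Set (Euc m)) :
    Set C(Icc (0:ℝ) T, Euc m) :=
  {y | ∃ z : ℝ → Euc m, IsSolution F z ∧ z 0 ∈ M ∧ ∀ u : Icc (0:ℝ) T, y u = z u}

/-- A generalised stochastic approximation process relative to `F`. -/
def IsGSAP {m : ℕ} {Ω : Type*} [MeasurableSpace Ω] (μ : Measure Ω)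
    (F : Euc m → Set (Euc m)) (M : Set (Euc m)) (γ : ℕ → ℝ)
    (Fn : ℕ → Euc m → Set (Euc m)) (U : ℕ → Ω → Euc m) (x : ℕ → Ω → Euc m) : Prop :=
  (∀ n, 0 < γ n) ∧
  Tendsto (fun n => ∑ i ∈ Finset.range n, γ (i + 1)) atTop atTop ∧
  Tendsto γ atTop (𝓝 0) ∧
  (∃ C, ∀ n ω, ‖U n ω‖ ≤ C) ∧
  (∀ n ω, x (n + 1) ω - x n ω - γ (n + 1) • U (n + 1) ω ∈ γ (n + 1) • Fn n (x n ω)) ∧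
  (∀ T > 0, ∀ᵐ ω ∂μ, Tendsto
    (fun n => ⨆ k : {k : ℕ // ∑ i ∈ Finset.Ico n k, γ i ≤ T},
      ‖∑ i ∈ Finset.Ico n (k : ℕ), γ (i + 1) • U (i + 1) ω‖) atTop (𝓝 0)) ∧
  (∀ n ω, x n ω ∈ M) ∧
  (∀ δ > 0, ∃ n₀ : ℕ, ∀ n ≥ n₀, ∀ ω, Fn n (x n ω) ⊆ Fdelta F δ (x n ω))

open RealInnerProductSpace in
lemma aux_compact_hull {m : ℕ} {K : Set (Euc m)} (hK : IsCompact K) :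
    IsCompact (convexHull ℝ K) := by
  rcases K.eq_empty_or_nonempty with rfl | ⟨x0, hx0⟩
  · simp
  have key : convexHull ℝ K = (fun q : (Fin (m+1) → ℝ) × (Fin (m+1) → Euc m) =>
      ∑ i, q.1 i • q.2 i) '' (stdSimplex ℝ (Fin (m+1)) ×ˢ (Set.univ.pi fun _ => K)) := by
    apply Set.Subset.antisymm
    · intro x hx
      obtain ⟨ι, hι, z, w, hz, hai, hw, hw1, hwx⟩ := eq_pos_convex_span_of_mem_convexHull hx
      have hcard : Fintype.card ι ≤ Fintype.card (Fin (m+1)) := by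
        have := hai.card_le_finrank_succ
        have h2 := Submodule.finrank_le (vectorSpan ℝ (Set.range z))
        simp at h2 ⊢
        omega
      obtain ⟨e⟩ := Function.Embedding.nonempty_of_card_le hcard
      have hs : ∀ {M : Type} [AddCommMonoid M] (F : Fin (m+1) → M) (G : ι → M),
          (∀ i, F (e i) = G i) → (∀ j, (∀ i, e i ≠ j) → F j = 0) → ∑ j, F j = ∑ i, G i := by
        intro M _ F G h1 h2
        symm
        exact Fintype.sum_of_injective e e.injective G F
          (fun j hj => h2 j (fun i hi => hj ⟨i, hi⟩)) (fun i => (h1 i).symm)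
      have hE : ∀ j, (∀ i, e i ≠ j) → ¬ ∃ i, e i = j := fun j hj ⟨i, hi⟩ => hj i hi
      refine ⟨(Function.extend e w 0, Function.extend e z (fun _ => x0)), ⟨⟨?_, ?_⟩, ?_⟩, ?_⟩
      · intro j
        by_cases hj : ∃ i, e i = j
        · obtain ⟨i, rfl⟩ := hj
          simp only [e.injective.extend_apply]
          exact (hw i).le
        · simp [Function.extend_apply' _ _ _ hj]
      · rw [← hw1]
        apply hs
        · intro i; exact e.injective.extend_apply _ _ _
        · intro j hj; simp [Function.extend_apply' _ _ _ (hE j hj)]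
      · intro j _
        by_cases hj : ∃ i, e i = j
        · obtain ⟨i, rfl⟩ := hj
          simp only [e.injective.extend_apply]
          exact hz ⟨i, rfl⟩
        · simp [Function.extend_apply' _ _ _ hj, hx0]
      · rw [← hwx]
        apply hs
        · intro i; simp only [e.injective.extend_apply]
        · intro j hj; simp [Function.extend_apply' _ _ _ (hE j hj)]
    · rintro _ ⟨⟨w, z⟩, ⟨⟨hw0, hw1⟩, hz⟩, rfl⟩
      exact (convex_convexHull ℝ K).sum_mem (fun i _ => hw0 i) hw1
        (fun i _ => subset_convexHull ℝ K (hz i trivial))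
  rw [key]
  exact ((isCompact_stdSimplex ℝ _).prod (isCompact_univ_pi fun _ => hK)).image (by fun_prop)

open RealInnerProductSpace in
lemma aux_pointwise {m : ℕ} (x : ℕ → Euc m) (C : ℝ) (hC : ∀ n, ‖x n‖ ≤ C) (y : Euc m)
    (D : Set (Euc m)) (hD : Dense D)
    (h : ∀ p ∈ D, ∀ N : ℕ, ∀ ε > 0, ∃ k ≥ N, ⟪p, y⟫ - ε < ⟪p, x k⟫) :
    y ∈ convexHull ℝ {z | MapClusterPt z atTop x} := by
  have hcl : IsClosed {z | MapClusterPt z atTop x} := isClosed_setOfPred_clusterPt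
  have hsub : {z | MapClusterPt z atTop x} ⊆ Metric.closedBall 0 C := by
    intro z hz
    exact isClosed_closedBall.mem_of_mapClusterPt hz (Eventually.of_forall fun n => by
      simpa using hC n)
  have hK := (isCompact_closedBall (0 : Euc m) C).of_isClosed_subset hcl hsub
  by_contra hy
  obtain ⟨f, c, hf, hc⟩ := geometric_hahn_banach_closed_point (convex_convexHull ℝ _)
    (aux_compact_hull hK).isClosed hy
  obtain ⟨p, rfl⟩ := (InnerProductSpace.toDual ℝ (Euc m)).surjective f
  simp only [InnerProductSpace.toDual_apply_apply] at hf hc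
  have hfreq : ∃ᶠ k in atTop, x k ∈ Metric.closedBall 0 C ∩ {z | c ≤ ⟪p, z⟫} := by
    rw [frequently_atTop]
    intro N
    set ε := (⟪p, y⟫ - c) / 2 with hε
    have hε0 : 0 < ε := by linarith
    have hC0 : 0 ≤ C := (norm_nonneg _).trans (hC 0)
    have hB : 0 < ‖y‖ + C + 1 := by positivity
    obtain ⟨p', hp', hd⟩ := hD.exists_dist_lt p (div_pos hε0 hB)
    obtain ⟨k, hk, hlt⟩ := h p' hp' N (ε) hε0
    refine ⟨k, hk, by simpa using hC k, ?_⟩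
    have h1 : ⟪p - p', y⟫ ≤ ‖p - p'‖ * ‖y‖ := real_inner_le_norm _ _
    have h2 : -⟪p - p', x k⟫ ≤ ‖p - p'‖ * ‖x k‖ := by
      rw [← inner_neg_right, ← norm_neg (x k)]; exact real_inner_le_norm _ _
    rw [inner_sub_left] at h1 h2
    have h3 : ‖p - p'‖ * ‖x k‖ ≤ ‖p - p'‖ * C := by gcongr; exact hC k
    rw [dist_eq_norm, lt_div_iff₀ hB] at hd
    have := norm_nonneg (p - p')
    simp only [Set.mem_ofPred_eq]
    nlinarith
  have hcomp : IsCompact (Metric.closedBall (0 : Euc m) C ∩ {z | c ≤ ⟪p, z⟫}) :=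
    (isCompact_closedBall (0 : Euc m) C).inter_right
      (isClosed_le continuous_const (by fun_prop))
  obtain ⟨a, ha, hac⟩ := hcomp.exists_mapClusterPt_of_frequently hfreq
  exact absurd (hf a (subset_convexHull ℝ _ hac)) (not_lt.mpr ha.2)

open RealInnerProductSpace in
lemma aux_weak {m : ℕ} {α : Type*} [MeasurableSpace α] [MeasurableSpace.CountablyGenerated α]
    (ν : Measure α) [IsFiniteMeasure ν] (f : ℕ → α → Euc m)
    (hf : ∀ n, AEStronglyMeasurable (f n) ν) (hb : ∀ n, ∀ᵐ u ∂ν, ‖f n u‖ ≤ 1) :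
    ∃ φ : ℕ → ℕ, StrictMono φ ∧ ∃ F : α → Euc m, MemLp F 2 ν ∧
      ∀ q : α → Euc m, MemLp q 2 ν →
        Tendsto (fun k => ∫ u, ⟪f (φ k) u, q u⟫ ∂ν) atTop (𝓝 (∫ u, ⟪F u, q u⟫ ∂ν)) := by
  have : Fact ((2 : ENNReal) ≠ ⊤) := ⟨by norm_num⟩
  have hm : ∀ n, MemLp (f n) 2 ν := fun n => MemLp.of_bound (hf n) 1 (hb n)
  set X : ℕ → Lp (Euc m) 2 ν := fun n => (hm n).toLp (f n) with hX
  obtain ⟨C, hC⟩ : ∃ C, ∀ n, ‖X n‖ ≤ C := by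
    refine ⟨_, fun n => Lp.norm_le_of_ae_bound (C := 1) zero_le_one ?_⟩
    filter_upwards [hb n, (hm n).coeFn_toLp] with u h1 h2
    rw [hX, h2]; exact h1
  let Y : ℕ → WeakDual ℝ (Lp (Euc m) 2 ν) := fun n =>
    StrongDual.toWeakDual (InnerProductSpace.toDual ℝ _ (X n))
  obtain ⟨y, -, φ, hφ, hlim⟩ := WeakDual.isSeqCompact_closedBall ℝ (Lp (Euc m) 2 ν) 0 C
    (x := Y) (fun n => by
      show InnerProductSpace.toDual ℝ _ (X n) ∈ Metric.closedBall (0 : StrongDual ℝ (Lp (Euc m) 2 ν)) C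
      simpa using hC n)
  obtain ⟨F, hF⟩ := (InnerProductSpace.toDual ℝ (Lp (Euc m) 2 ν)).surjective
    (WeakDual.toStrongDual y)
  refine ⟨φ, hφ, F, Lp.memLp F, fun q hq => ?_⟩
  have h1 := ((WeakDual.eval_continuous (𝕜 := ℝ) (hq.toLp q)).tendsto y).comp hlim
  have e1 : ∀ k, ∫ u, ⟪f (φ k) u, q u⟫ ∂ν = Y (φ k) (hq.toLp q) := by
    intro k
    show _ = ⟪X (φ k), hq.toLp q⟫
    rw [L2.inner_def]
    apply integral_congr_ae
    filter_upwards [(hm (φ k)).coeFn_toLp, hq.coeFn_toLp] with u h1 h2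
    rw [h1, h2]
  have e2 : ∫ u, ⟪F u, q u⟫ ∂ν = y (hq.toLp q) := by
    have : y (hq.toLp q) = ⟪F, hq.toLp q⟫ := by
      rw [← InnerProductSpace.toDual_apply_apply, hF]; rfl
    rw [this, L2.inner_def]
    apply integral_congr_ae
    filter_upwards [hq.coeFn_toLp] with u h2
    rw [h2]
  simp_rw [e1, e2]
  exact h1

open RealInnerProductSpace in
lemma aux_ae_le {m : ℕ} {α : Type*} [MeasurableSpace α]
    (ν : Measure α) [IsFiniteMeasure ν] (f : ℕ → α → Euc m)
    (hf : ∀ n, AEStronglyMeasurable (f n) ν) (hb : ∀ n, ∀ᵐ u ∂ν, ‖f n u‖ ≤ 1)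
    (F : α → Euc m) (hF : MemLp F 2 ν)
    (hw : ∀ q : α → Euc m, MemLp q 2 ν →
        Tendsto (fun k => ∫ u, ⟪f k u, q u⟫ ∂ν) atTop (𝓝 (∫ u, ⟪F u, q u⟫ ∂ν)))
    (p : Euc m) (N : ℕ) :
    ∀ᵐ u ∂ν, ∀ ε > 0, ∃ k ≥ N, ⟪p, F u⟫ - ε < ⟪p, f k u⟫ := by
  have hbd : ∀ᵐ u ∂ν, ∀ n, |⟪p, f n u⟫| ≤ ‖p‖ := by
    filter_upwards [ae_all_iff.2 hb] with u hu n
    calc _ ≤ ‖p‖ * ‖f n u‖ := abs_real_inner_le_norm _ _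
      _ ≤ ‖p‖ * 1 := by gcongr; exact hu n
      _ = _ := mul_one _
  set s : α → ℝ := fun u => ⨆ k : ℕ, ⟪p, f (N + k) u⟫ with hs
  have hbdd : ∀ u, (∀ n, |⟪p, f n u⟫| ≤ ‖p‖) → BddAbove (Set.range fun k : ℕ => ⟪p, f (N + k) u⟫) := by
    rintro u hu
    exact ⟨‖p‖, by rintro _ ⟨k, rfl⟩; exact (abs_le.1 (hu _)).2⟩
  have hfi : ∀ n, Integrable (fun u => ⟪p, f n u⟫) ν := fun n =>
    (MemLp.of_bound (p := 1) (hf n) 1 (hb n)).integrable le_rfl |>.const_inner p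
  have hFi : Integrable (fun u => ⟪p, F u⟫) ν := (hF.integrable (by norm_num)).const_inner p
  have hsm : AEMeasurable s ν := AEMeasurable.iSup fun k => (hfi (N + k)).aestronglyMeasurable.aemeasurable
  have hsi : Integrable s ν := by
    refine Integrable.of_bound hsm.aestronglyMeasurable ‖p‖ ?_
    filter_upwards [hbd] with u hu
    rw [Real.norm_eq_abs, abs_le]
    exact ⟨(abs_le.1 (hu (N + 0))).1.trans (le_ciSup (hbdd u hu) 0), ciSup_le fun k => (abs_le.1 (hu _)).2⟩
  have hle : (fun u => ⟪p, F u⟫) ≤ᵐ[ν] s := by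
    refine ae_le_of_forall_setIntegral_le hFi hsi fun A hA _ => ?_
    have hq : MemLp (A.indicator fun _ => p) 2 ν := (memLp_const p).indicator hA
    have e : ∀ G : α → Euc m, ∫ u, ⟪G u, A.indicator (fun _ => p) u⟫ ∂ν = ∫ u in A, ⟪p, G u⟫ ∂ν := by
      intro G
      rw [← integral_indicator hA]
      congr 1
      ext u
      by_cases hu : u ∈ A <;> simp [hu, real_inner_comm]
    have ht := hw _ hq
    simp_rw [e] at ht
    refine le_of_tendsto ht ?_
    filter_upwards [eventually_ge_atTop N] with k hk
    refine setIntegral_mono_ae (hfi k).integrableOn hsi.integrableOn ?_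
    filter_upwards [hbd] with u hu
    obtain ⟨j, rfl⟩ := Nat.exists_eq_add_of_le hk
    exact le_ciSup (hbdd u hu) j
  filter_upwards [hle] with u hu ε hε
  have : ⟪p, F u⟫ - ε < s u := by linarith
  obtain ⟨k, hk⟩ := exists_lt_of_lt_ciSup this
  exact ⟨N + k, by omega, hk⟩

open RealInnerProductSpace in
lemma aux_main {m : ℕ} {α : Type*} [MeasurableSpace α] [MeasurableSpace.CountablyGenerated α]
    (μ : Measure α) [IsFiniteMeasure μ] (g : α → ℝ) (hg : Integrable g μ) (f : ℕ → α → Euc m)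
    (hf : ∀ n, AEStronglyMeasurable (f n) μ) (hb : ∀ n, ∀ᵐ u ∂μ, ‖f n u‖ ≤ g u) :
    ∃ φ : ℕ → ℕ, StrictMono φ ∧ ∃ F : α → Euc m, Integrable F μ ∧
      (∀ᵐ u ∂μ, F u ∈ convexHull ℝ {z | MapClusterPt z atTop fun k => f (φ k) u}) ∧
      ∀ q : α → Euc m, MemLp q ⊤ μ →
        Tendsto (fun k => ∫ u, ⟪f (φ k) u, q u⟫ ∂μ) atTop (𝓝 (∫ u, ⟪F u, q u⟫ ∂μ)) := by
  let w : α → NNReal := fun u => 1 + ‖g u‖₊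
  have hw0 : ∀ u, (0:ℝ) < w u := fun u => by simp only [w]; push_cast; positivity
  have hwm : AEMeasurable w μ := hg.aestronglyMeasurable.aemeasurable.nnnorm.const_add 1
  have hwi : Integrable (fun u => (w u : ℝ)) μ := by
    simp only [w]; push_cast; exact (integrable_const 1).add hg.norm
  set ν := μ.withDensity (fun u => (w u : ENNReal)) with hν
  have hfin : IsFiniteMeasure ν := by
    apply isFiniteMeasure_withDensity
    have := hwi.2
    simp only [HasFiniteIntegral] at this
    refine ne_of_lt (lt_of_le_of_lt (le_of_eq ?_) this)
    congr 1; ext u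
    simp [enorm]
  have hac : ν ≪ μ := withDensity_absolutelyContinuous _ _
  have hac' : μ ≪ ν := withDensity_absolutelyContinuous' hwm.coe_nnreal_ennreal
    (Eventually.of_forall fun u => by simp [w])
  let f' : ℕ → α → Euc m := fun n u => (w u : ℝ)⁻¹ • f n u
  have hff : ∀ n u, (w u : ℝ) • f' n u = f n u := fun n u => by
    simp only [f']; rw [smul_inv_smul₀ (hw0 u).ne']
  have hf' : ∀ n, AEStronglyMeasurable (f' n) ν := fun n =>
    ((hwm.coe_nnreal_real.inv.aestronglyMeasurable).smul (hf n)).mono_ac hac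
  have hb' : ∀ n, ∀ᵐ u ∂ν, ‖f' n u‖ ≤ 1 := fun n => hac.ae_le (by
    filter_upwards [hb n] with u hu
    simp only [f']
    rw [norm_smul, norm_inv, Real.norm_eq_abs, abs_of_pos (hw0 u), inv_mul_le_one₀ (hw0 u)]
    refine hu.trans ((le_abs_self _).trans ?_)
    simp [w])
  obtain ⟨φ, hφ, F, hF, hlim⟩ := aux_weak ν f' hf' hb'
  refine ⟨φ, hφ, fun u => (w u : ℝ) • F u, ?_, ?_, ?_⟩
  · exact (integrable_withDensity_iff_integrable_coe_smul₀ hwm).1 (hF.integrable (by norm_num))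
  · have hall : ∀ᵐ u ∂μ, ∀ i N : ℕ, ∀ ε > 0, ∃ k ≥ N,
        ⟪TopologicalSpace.denseSeq (Euc m) i, F u⟫ - ε < ⟪TopologicalSpace.denseSeq (Euc m) i, f' (φ k) u⟫ := by
      refine hac'.ae_le ?_
      refine ae_all_iff.2 fun i => ae_all_iff.2 fun N => ?_
      exact aux_ae_le ν (fun k => f' (φ k)) (fun k => hf' _) (fun k => hb' _) F hF hlim _ N
    filter_upwards [hall, ae_all_iff.2 hb] with u hu hbu
    refine aux_pointwise _ (g u) (fun k => hbu _) _ _ (TopologicalSpace.denseRange_denseSeq (Euc m)) ?_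
    rintro _ ⟨i, rfl⟩ N ε hε
    obtain ⟨k, hk, hlt⟩ := hu i N (ε / w u) (div_pos hε (hw0 u))
    refine ⟨k, hk, ?_⟩
    rw [← hff, inner_smul_right, inner_smul_right]
    have := mul_lt_mul_of_pos_left hlt (hw0 u)
    rwa [mul_sub, mul_div_cancel₀ _ (hw0 u).ne'] at this
  · intro q hq
    have hq' : MemLp q 2 ν := by
      have h1 : MemLp q ⊤ ν := ⟨hq.1.mono_ac hac, by
        have := hq.2
        rw [eLpNorm_exponent_top] at this ⊢
        exact (essSup_mono_measure hac).trans_lt this⟩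
      exact h1.mono_exponent le_top
    have e : ∀ G : α → Euc m, ∫ u, ⟪G u, q u⟫ ∂ν = ∫ u, ⟪(w u : ℝ) • G u, q u⟫ ∂μ := by
      intro G
      rw [hν, integral_withDensity_eq_integral_smul₀ hwm]
      congr 1; ext u
      rw [real_inner_smul_left]; rfl
    have := hlim q hq'
    simp_rw [e, hff] at this
    exact this

open RealInnerProductSpace in
/-- (Proposition `convsimple`, general case.) Without the convexity
assumption, the weak `L¹` limit `h` of a subsequence of integrable selections of the
`H_n` takes values in the convex hulls `co(H(u))`; in particular the primitives
converge pointwise. -/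
theorem weak_limit_of_selections_convex_hull
    {m : ℕ} (T : ℝ) (hT : 0 < T)
    (Hn : ℕ → ℝ → Set (Euc m)) (H : ℝ → Set (Euc m))
    (hbound : ∃ g : ℝ → ℝ, IntegrableOn g (Icc (0:ℝ) T) volume ∧
      ∀ (n : ℕ), ∀ t ∈ Icc (0:ℝ) T, ∀ x ∈ Hn n t, ‖x‖ ≤ g t)
    (hHne : ∀ τ ∈ Icc (0:ℝ) T, (H τ).Nonempty)
    (hlimsup : ∀ τ ∈ Icc (0:ℝ) T, setLimsup (fun n => Hn n τ) ⊆ H τ)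
    (hn : ℕ → ℝ → Euc m)
    (hsel : ∀ n : ℕ, IntegrableOn (hn n) (Icc (0:ℝ) T) volume ∧
      ∀ u ∈ Icc (0:ℝ) T, hn n u ∈ Hn n u) :
    ∃ φ : ℕ → ℕ, StrictMono φ ∧ ∃ h : ℝ → Euc m,
      IntegrableOn h (Icc (0:ℝ) T) volume ∧
      (∀ u ∈ Icc (0:ℝ) T, h u ∈ convexHull ℝ (H u)) ∧
      (∀ g : ℝ → Euc m, MemLp g ⊤ (volume.restrict (Icc (0:ℝ) T)) →
        Tendsto (fun k => ∫ u in Icc (0:ℝ) T, ⟪hn (φ k) u, g u⟫)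
          atTop (𝓝 (∫ u in Icc (0:ℝ) T, ⟪h u, g u⟫))) ∧
      ∀ τ ∈ Icc (0:ℝ) T,
        Tendsto (fun k => ∫ u in (0:ℝ)..τ, hn (φ k) u) atTop
          (𝓝 (∫ u in (0:ℝ)..τ, h u)) := by
  obtain ⟨g, hg, hgb⟩ := hbound
  have hI : MeasurableSet (Icc (0:ℝ) T) := measurableSet_Icc
  obtain ⟨φ, hφ, F, hF, hFc, hlim⟩ := aux_main (volume.restrict (Icc (0:ℝ) T)) g hg hn
    (fun n => (hsel n).1.aestronglyMeasurable)
    (fun n => (ae_restrict_iff' hI).2 (Eventually.of_forall fun u hu =>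
      hgb n u hu _ ((hsel n).2 u hu)))
  have hsub : ∀ u ∈ Icc (0:ℝ) T, {z | MapClusterPt z atTop fun k => hn (φ k) u} ⊆ H u := by
    intro u hu z hz
    refine hlimsup u hu fun U hU => ?_
    have h1 : ∃ᶠ k in atTop, hn (φ k) u ∈ U := hz.frequently hU
    rw [← Nat.frequently_atTop_iff_infinite]
    refine hφ.tendsto_atTop.frequently (h1.mono fun k hk => ?_)
    exact ⟨_, hk, (hsel _).2 u hu⟩
  classical
  let h : ℝ → Euc m := fun u =>
    if F u ∈ convexHull ℝ (H u) then F u else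
      if hu : u ∈ Icc (0:ℝ) T then (hHne u hu).some else 0
  have hFh : F =ᵐ[volume.restrict (Icc (0:ℝ) T)] h := by
    filter_upwards [hFc, ae_restrict_mem hI] with u h1 h2
    have : F u ∈ convexHull ℝ (H u) := convexHull_mono (hsub u h2) h1
    simp only [h]; rw [if_pos this]
  have hint : IntegrableOn h (Icc (0:ℝ) T) volume := hF.congr hFh
  have hweak : ∀ g : ℝ → Euc m, MemLp g ⊤ (volume.restrict (Icc (0:ℝ) T)) →
        Tendsto (fun k => ∫ u in Icc (0:ℝ) T, ⟪hn (φ k) u, g u⟫)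
          atTop (𝓝 (∫ u in Icc (0:ℝ) T, ⟪h u, g u⟫)) := by
    intro q hq
    have e : ∫ u in Icc (0:ℝ) T, ⟪h u, q u⟫ = ∫ u in Icc (0:ℝ) T, ⟪F u, q u⟫ := by
      apply integral_congr_ae
      filter_upwards [hFh] with u hu
      rw [hu]
    rw [e]; exact hlim q hq
  refine ⟨φ, hφ, h, hint, ?_, hweak, ?_⟩
  · intro u hu
    simp only [h]
    split_ifs with h1
    · exact h1
    · exact subset_convexHull ℝ _ (hHne u hu).some_mem
  · intro τ hτ
    have hss : Ioc 0 τ ⊆ Icc (0:ℝ) T := fun x hx => ⟨hx.1.le, hx.2.trans hτ.2⟩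
    have e : ∀ G : ℝ → Euc m, IntegrableOn G (Icc (0:ℝ) T) volume → ∀ p : Euc m,
        ∫ u in Icc (0:ℝ) T, ⟪G u, (Ioc 0 τ).indicator (fun _ => p) u⟫
          = ⟪p, ∫ u in (0:ℝ)..τ, G u⟫ := by
      intro G hG p
      rw [intervalIntegral.integral_of_le hτ.1, ← integral_inner (hG.mono_set hss),
        ← integral_indicator hI, ← integral_indicator measurableSet_Ioc]
      congr 1
      ext u
      by_cases hu : u ∈ Ioc 0 τ
      · simp [hu, hss hu, real_inner_comm]
      · simp [hu, Set.indicator]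
    have key : ∀ p : Euc m, Tendsto (fun k => ⟪p, ∫ u in (0:ℝ)..τ, hn (φ k) u⟫) atTop
        (𝓝 ⟪p, ∫ u in (0:ℝ)..τ, h u⟫) := by
      intro p
      have := hweak ((Ioc 0 τ).indicator fun _ => p)
        ((memLp_const p).indicator measurableSet_Ioc)
      rw [e h hint p] at this
      simp_rw [e _ (hsel _).1 p] at this
      exact this
    have hsum : ∀ v : Euc m, ∑ i, ⟪EuclideanSpace.basisFun (Fin m) ℝ i, v⟫ •
        EuclideanSpace.basisFun (Fin m) ℝ i = v := fun v =>
      (EuclideanSpace.basisFun (Fin m) ℝ).sum_repr' v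
    rw [← hsum (∫ u in (0:ℝ)..τ, h u)]
    refine Tendsto.congr (fun k => hsum _) ?_
    exact tendsto_finsetSum _ fun i _ => (key _).smul_const _
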